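/- Alice's use of the detection loophole is irrelevant: suppose additionally that J is a finite nonempty type of Alice's strategies with a probability distribution q : J → ℝ (q_j ≥ 0, Σ_j q_j = 1), Alice's detection efficiencies η'_j(a) ∈ [0,1] satisfy Σ_j q_j η'_j(a) > 0 for every a ∈ 𝒜, and for each j, a there is a probability distribution P_j(·|a) on M. Define P'(A|a) := (Σ_j q_j η'_j(a) P_j(A|a)) / (Σ_j q_j η'_j(a)). Then (i) P'(·|a) is a probability distribution on M for every a, and (ii) for all B, a, b for which the denominators are strictly positive, (Σ_{i,j,A} p_i q_j η_i(A,b) η'_j(a) P_i(B|A,b) P_j(A|a)) / (Σ_{i,j,A} p_i q_j η_i(A,b) η'_j(a) P_j(A|a)) = (Σ_{i,A} p_i η_i(A,b) P_i(B|A,b) P'(A|a)) / (Σ_{i,A} p_i η_i(A,b) P'(A|a)). -/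

import Mathlib

/-!
On input `a`, Alice's device uses strategy `j` and clicks with weight `w j = q j * η' j a`,
so `P' a` is the center of mass of the distributions `Pj j a` with weights `w`; it is a distribution
because the standard simplex is convex. The probability of any event on Bob's side is a linear
functional of the distribution of the message. Hence averaging it over Alice's strategies multiplies
its value at `P' a` by the total click probability `∑ j, w j`, which cancels in conditional
probabilities.
-/

section CenterMass

variable {ι K : Type*} [Field K]

theorem sum_smul_map_eq_smul_map_centerMass {E F : Type*} [AddCommGroup E] [Module K E]
    [AddCommGroup F] [Module K F] (L : E →ₗ[K] F) (t : Finset ι) {w : ι → K}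
    (hw : ∑ j ∈ t, w j ≠ 0) (z : ι → E) :
    ∑ j ∈ t, w j • L (z j) = (∑ j ∈ t, w j) • L (t.centerMass w z) := by
  simp only [Finset.centerMass, map_smul, map_sum, smul_inv_smul₀ hw]

theorem centerMass_apply {M : Type*} (t : Finset ι) (w : ι → K) (P : ι → M → K) (A : M) :
    t.centerMass w P A = (∑ j ∈ t, w j * P j A) / ∑ j ∈ t, w j := by
  simp only [Finset.centerMass, Pi.smul_apply, Finset.sum_apply, smul_eq_mul, inv_mul_eq_div]

end CenterMass

section EventFunctional

variable {I J M K : Type*} [Fintype I] [Fintype J] [Fintype M] [Field K]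

/-- The probability of an event on Bob's side as a linear functional of the distribution of the
message he receives. The event is encoded by `f i A`, the joint weight of Bob using strategy `i` and
of the event, given message `A`: `p i * η i A b` for a detection, `p i * η i A b * Pi i A b B` for
the output `B`. -/
def eventFunctional (f : I → M → K) : (M → K) →ₗ[K] K :=
  ∑ i, ∑ A, f i A • LinearMap.proj A

theorem eventFunctional_apply (f : I → M → K) (μ : M → K) :
    eventFunctional f μ = ∑ i, ∑ A, f i A * μ A := by
  simp only [eventFunctional, LinearMap.sum_apply, LinearMap.smul_apply, LinearMap.proj_apply,
    smul_eq_mul]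

theorem sum_mul_eq_mul_eventFunctional_centerMass (f : I → M → K) {w : J → K}
    (hw : ∑ j, w j ≠ 0) (P : J → M → K) :
    ∑ i, ∑ j, ∑ A, f i A * (w j * P j A) =
      (∑ j, w j) * eventFunctional f (Finset.univ.centerMass w P) := by
  calc ∑ i, ∑ j, ∑ A, f i A * (w j * P j A)
      = ∑ j, w j • eventFunctional f (P j) := by
        rw [Finset.sum_comm]
        simp only [eventFunctional_apply, smul_eq_mul, Finset.mul_sum, mul_left_comm]
    _ = (∑ j, w j) * eventFunctional f (Finset.univ.centerMass w P) :=
        sum_smul_map_eq_smul_map_centerMass _ _ hw P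

end EventFunctional

theorem alice_detection_loophole_irrelevant_general
    {𝒜 ℬ M 𝒪 I J K : Type*} [Field K] [LinearOrder K] [IsStrictOrderedRing K]
    [Fintype M] [Fintype I] [Fintype J]
    (p : I → K) (Pi : I → M → ℬ → 𝒪 → K) (η : I → M → ℬ → K)
    (q : J → K) (hq : ∀ j, 0 ≤ q j) (η' : J → 𝒜 → K) (hη' : ∀ j a, 0 ≤ η' j a)
    (hclick : ∀ a, 0 < ∑ j, q j * η' j a)
    (Pj : J → 𝒜 → M → K) (hPj : ∀ j a, Pj j a ∈ stdSimplex K M)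
    (P' : 𝒜 → M → K)
    (hP' : ∀ a A, P' a A = (∑ j, q j * η' j a * Pj j a A) / ∑ j, q j * η' j a) :
    (∀ a, P' a ∈ stdSimplex K M) ∧
    ∀ (B : 𝒪) (a : 𝒜) (b : ℬ),
      ∑ i, ∑ j, ∑ A, p i * q j * η i A b * η' j a * Pj j a A ≠ 0 →
      ∑ i, ∑ A, p i * η i A b * P' a A ≠ 0 ∧
      (∑ i, ∑ j, ∑ A, p i * q j * η i A b * η' j a * Pi i A b B * Pj j a A) /
          (∑ i, ∑ j, ∑ A, p i * q j * η i A b * η' j a * Pj j a A) =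
        (∑ i, ∑ A, p i * η i A b * Pi i A b B * P' a A) /
          (∑ i, ∑ A, p i * η i A b * P' a A) := by
  have effective_eq (a : 𝒜) :
      P' a = Finset.univ.centerMass (fun j ↦ q j * η' j a) (fun j ↦ Pj j a) :=
    funext fun A ↦ (hP' a A).trans (centerMass_apply _ _ _ A).symm
  refine ⟨fun a ↦ ?_, fun B a b detected ↦ ?_⟩
  · rw [effective_eq]
    exact (convex_stdSimplex K M).centerMass_mem (fun j _ ↦ mul_nonneg (hq j) (hη' j a))
      (hclick a) fun j _ ↦ hPj j a
  have factor_click (f : I → M → K) : ∑ i, ∑ j, ∑ A, f i A * (q j * η' j a * Pj j a A) =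
      (∑ j, q j * η' j a) * ∑ i, ∑ A, f i A * P' a A := by
    rw [sum_mul_eq_mul_eventFunctional_centerMass f (hclick a).ne', ← effective_eq,
      eventFunctional_apply]
  have detection : ∑ i, ∑ j, ∑ A, p i * q j * η i A b * η' j a * Pj j a A =
      (∑ j, q j * η' j a) * ∑ i, ∑ A, p i * η i A b * P' a A := by
    simpa only [mul_assoc, mul_left_comm] using factor_click fun i A ↦ p i * η i A b
  have output : ∑ i, ∑ j, ∑ A, p i * q j * η i A b * η' j a * Pi i A b B * Pj j a A =
      (∑ j, q j * η' j a) * ∑ i, ∑ A, p i * η i A b * Pi i A b B * P' a A := by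
    simpa only [mul_assoc, mul_left_comm] using factor_click fun i A ↦ p i * η i A b * Pi i A b B
  exact ⟨right_ne_zero_of_mul (detection ▸ detected),
    by rw [output, detection, mul_div_mul_left _ _ (hclick a).ne']⟩

/-- Alice's use of the detection loophole is irrelevant.
Given Bob's DL strategy (distribution `p` on strategies `I`, response
distributions `Pi`, efficiencies `η`) and Alice's DL strategy (distribution `q`
on `J`, efficiencies `η'` with positive total click probability, message
distributions `Pj`), the effective message distribution
`P' a A = (∑ j, q j * η' j a * Pj j a A) / (∑ j, q j * η' j a)` is a
probability distribution, and the full DL statistics (with Alice's losses)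
coincide with the DL statistics where Alice simply prepares `P'` without
resorting to the detection loophole. -/
theorem alice_detection_loophole_irrelevant
    {𝒜 ℬ M 𝒪 I J : Type*}
    [Fintype 𝒜] [Fintype ℬ] [Fintype M] [Fintype 𝒪] [Fintype I] [Fintype J]
    [Nonempty 𝒜] [Nonempty ℬ] [Nonempty M] [Nonempty 𝒪] [Nonempty I] [Nonempty J]
    -- Bob's strategy distribution
    (p : I → ℝ) (hp : ∀ i, 0 ≤ p i) (hp1 : ∑ i, p i = 1)
    -- Bob's response distributions Pᵢ(B|A,b)
    (Pi : I → M → ℬ → 𝒪 → ℝ)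
    (hPi : ∀ i A b B, 0 ≤ Pi i A b B) (hPi1 : ∀ i A b, ∑ B, Pi i A b B = 1)
    -- Bob's detection efficiencies ηᵢ(A,b) ∈ [0,1]
    (η : I → M → ℬ → ℝ) (hη : ∀ i A b, 0 ≤ η i A b ∧ η i A b ≤ 1)
    -- Alice's strategy distribution
    (q : J → ℝ) (hq : ∀ j, 0 ≤ q j) (hq1 : ∑ j, q j = 1)
    -- Alice's detection efficiencies η'ⱼ(a) ∈ [0,1] with positive total click probability
    (η' : J → 𝒜 → ℝ) (hη' : ∀ j a, 0 ≤ η' j a ∧ η' j a ≤ 1)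
    (hclick : ∀ a, 0 < ∑ j, q j * η' j a)
    -- Alice's message distributions Pⱼ(A|a)
    (Pj : J → 𝒜 → M → ℝ)
    (hPj : ∀ j a A, 0 ≤ Pj j a A) (hPj1 : ∀ j a, ∑ A, Pj j a A = 1)
    -- the effective message distribution P'(A|a)
    (P' : 𝒜 → M → ℝ)
    (hP' : ∀ a A, P' a A =
      (∑ j, q j * η' j a * Pj j a A) / (∑ j, q j * η' j a)) :
    -- (i) P'(·|a) is a probability distribution on M
    (∀ a, (∀ A, 0 ≤ P' a A) ∧ ∑ A, P' a A = 1) ∧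
    -- (ii) the full DL statistics equal the DL statistics with Alice preparing P'
    (∀ (B : 𝒪) (a : 𝒜) (b : ℬ),
      0 < (∑ i, ∑ j, ∑ A, p i * q j * η i A b * η' j a * Pj j a A) →
      0 < (∑ i, ∑ A, p i * η i A b * P' a A) →
      (∑ i, ∑ j, ∑ A, p i * q j * η i A b * η' j a * Pi i A b B * Pj j a A) /
        (∑ i, ∑ j, ∑ A, p i * q j * η i A b * η' j a * Pj j a A)
      =
      (∑ i, ∑ A, p i * η i A b * Pi i A b B * P' a A) /
        (∑ i, ∑ A, p i * η i A b * P' a A)) := by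
  have general := alice_detection_loophole_irrelevant_general p Pi η q hq η'
    (fun j a ↦ (hη' j a).1) hclick Pj (fun j a ↦ ⟨hPj j a, hPj1 j a⟩) P' hP'
  exact ⟨general.1, fun B a b detected _ ↦ (general.2 B a b detected.ne').2⟩
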